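/- arXiv:1708.06016 — 9 statements merged into one kernel-verified Lean document; each statement's English description precedes it below -/
import Mathlib

section
/- Let (x_n)_{n∈ℕ} be a strictly increasing sequence of positive real numbers. Then there exist functions f, g : ℝ → ℝ such that g is measurable and square integrable on (0,∞), f(t) = ∫_0^t g(x) dx for all t ≥ 0, f(x_n) = 0 for every n, and f is not identically zero on [0,∞). Consequently, for the Brownian-motion covariance kernel K(s,t) = min(s,t) on [0,∞), the functions {K(·, x_n)}_{n∈ℕ} do not have dense span in the Cameron–Martin space H(K). -/
/-!
All the points `x n` lie at or beyond `x 0`, so a single tooth of the saw, supported on `[0, x 0]`,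
already vanishes at each of them. With `a = x 0 / 2` this tooth is
`f t = 2 * min t a - min t (2 * a)`, that is `f = 2 K(·, a) - K(·, 2a)`. Its density `g` is `1` on
`(0, a]`, `-1` on `(a, 2a]` and `0` beyond, and `integral_indicator_Iic` computes the primitive.
In an abstract realization `Kv` the same combination `v = 2 Kv a - Kv (2a)` is orthogonal to every
`Kv (x n)`, while `⟪v, Kv a⟫ = a > 0`, so the span of the `Kv (x n)` is not dense.
-/

open RealInnerProductSpace MeasureTheory

/-- On `[0, ∞)` and for `c ≥ 0`, the kernel section `min · c` is the primitive of the
indicator of `(-∞, c]`. -/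
lemma integral_indicator_Iic {c t : ℝ} (hc : 0 ≤ c) (ht : 0 ≤ t) :
    ∫ u in (0:ℝ)..t, (Set.Iic c).indicator (fun _ => (1:ℝ)) u = min t c := by
  rw [intervalIntegral.integral_of_le ht, setIntegral_indicator measurableSet_Iic,
    Set.Ioc_inter_Iic, setIntegral_const]
  simp [le_min ht hc]

lemma intervalIntegrable_indicator_Iic (c t : ℝ) :
    IntervalIntegrable ((Set.Iic c).indicator (fun _ => (1:ℝ))) volume 0 t := by
  rw [intervalIntegrable_iff]
  exact (intervalIntegrable_iff.1 (_root_.intervalIntegrable_const (c := (1:ℝ)))).indicator measurableSet_Iic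

/-- For any strictly increasing sequence `(x n)` of positive reals there
is a nonzero function `f` on `[0,∞)` of the form `f t = ∫_0^t g` with `g` measurable
and square integrable on `(0,∞)`, vanishing at every `x n`.  Consequently, for the
Brownian-motion covariance kernel `K(s,t) = min s t` on `[0,∞)` (realized abstractly
as a family `Kv : ℝ → H` of vectors with dense span in a real Hilbert space `H` and
`⟪Kv s, Kv t⟫ = min s t` for `s, t ≥ 0`), the family `{Kv (x n)}` does not have dense
span. -/
theorem stmt4 (x : ℕ → ℝ) (hx : StrictMono x) (hxpos : ∀ n, 0 < x n) :
    (∃ f g : ℝ → ℝ, Measurable g ∧ IntegrableOn (fun t => g t ^ 2) (Set.Ioi 0) ∧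
      (∀ t : ℝ, 0 ≤ t → f t = ∫ u in (0:ℝ)..t, g u) ∧
      (∀ n, f (x n) = 0) ∧ (∃ t : ℝ, 0 ≤ t ∧ f t ≠ 0)) ∧
    (∀ (H : Type) (_ : NormedAddCommGroup H), ∀ (_ : InnerProductSpace ℝ H)
      (_ : CompleteSpace H), ∀ Kv : ℝ → H,
      (∀ s t : ℝ, 0 ≤ s → 0 ≤ t → ⟪Kv s, Kv t⟫ = min s t) →
      Dense (Submodule.span ℝ (Kv '' Set.Ici 0) : Set H) →
      ¬ Dense (Submodule.span ℝ (Kv '' Set.range x) : Set H)) := by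
  have ha : 0 < x 0 / 2 := half_pos (hxpos 0)
  have hle : ∀ n, x 0 ≤ x n := fun n => hx.monotone (Nat.zero_le n)
  generalize hadef : x 0 / 2 = a at ha
  have hx0 : x 0 = 2 * a := by linarith
  have hint : ∀ t : ℝ, 0 ≤ t →
      ∫ u in (0:ℝ)..t, (2 * (Set.Iic a).indicator (fun _ => (1:ℝ)) u
        - (Set.Iic (2 * a)).indicator (fun _ => (1:ℝ)) u) = 2 * min t a - min t (2 * a) := by
    intro t ht
    rw [intervalIntegral.integral_sub ((intervalIntegrable_indicator_Iic a t).const_mul 2)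
      (intervalIntegrable_indicator_Iic (2 * a) t), intervalIntegral.integral_const_mul,
      integral_indicator_Iic ha.le ht, integral_indicator_Iic (by linarith) ht]
  refine ⟨⟨fun t => 2 * min t a - min t (2 * a),
    fun u => 2 * (Set.Iic a).indicator (fun _ => (1:ℝ)) u
      - (Set.Iic (2 * a)).indicator (fun _ => (1:ℝ)) u, ?_, ?_, fun t ht => (hint t ht).symm,
      fun n => ?_, a, ha.le, ?_⟩, ?_⟩
  · exact ((measurable_const.indicator measurableSet_Iic).const_mul 2).sub
      (measurable_const.indicator measurableSet_Iic)
  · -- The density takes the values `1`, `-1`, `0`, so its square is the indicator of `(-∞, 2a]`.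
    have hsq : (fun u => (2 * (Set.Iic a).indicator (fun _ => (1:ℝ)) u
        - (Set.Iic (2 * a)).indicator (fun _ => (1:ℝ)) u) ^ 2)
        = (Set.Iic (2 * a)).indicator (fun _ => (1:ℝ)) := by
      funext u
      simp only [Set.indicator_apply, Set.mem_Iic]
      split_ifs <;> first | (exfalso; linarith) | norm_num
    rw [hsq, IntegrableOn, integrable_indicator_iff measurableSet_Iic, IntegrableOn,
      Measure.restrict_restrict measurableSet_Iic, Set.inter_comm, Set.Ioi_inter_Iic]
    exact integrable_const (1:ℝ)
  · have := hle n
    simp only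
    rw [min_eq_right (by linarith), min_eq_right (by linarith), sub_self]
  · simp only
    rw [min_self, min_eq_left (by linarith)]
    linarith
  · intro H _ _ _ Kv hK _ hdense
    have horth : ∀ y ∈ Submodule.span ℝ (Kv '' Set.range x),
        ⟪(2:ℝ) • Kv a - Kv (2 * a), y⟫ = 0 := by
      intro y hy
      induction hy using Submodule.span_induction with
      | mem y hy =>
        obtain ⟨_, ⟨n, rfl⟩, rfl⟩ := hy
        have := hle n
        rw [inner_sub_left, real_inner_smul_left, hK _ _ ha.le (hxpos n).le,
          hK _ _ (by linarith) (hxpos n).le, min_eq_left (by linarith),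
          min_eq_left (by linarith), sub_self]
      | zero => exact inner_zero_right _
      | add y z _ _ hy hz => rw [inner_add_right, hy, hz, add_zero]
      | smul c y _ hy => rw [real_inner_smul_right, hy, mul_zero]
    have hzero : (2:ℝ) • Kv a - Kv (2 * a) = 0 :=
      hdense.eq_zero_of_inner_left ℝ horth
    -- `v = 0` contradicts `⟪v, Kv a⟫ = 2a - a = a`.
    have h := congrArg (fun v => ⟪v, Kv a⟫) hzero
    rw [inner_sub_left, real_inner_smul_left, inner_zero_left, hK _ _ ha.le ha.le,
      hK _ _ (by linarith) ha.le, min_self, min_eq_right (by linarith)] at h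
    linarith
end

section
/- For every n ∈ ℕ and every tuple t : Fin n → ℝ of nonnegative real numbers, the n × n real matrix with entries M_{ij} = min(t_i, t_j) is positive semidefinite. -/
/-- For every `n` and every tuple `t : Fin n → ℝ` of nonnegative reals,
the matrix with entries `min (t i) (t j)` is positive semidefinite.  (This is the
positive definiteness of the Brownian-motion covariance kernel `K(s,t) = s ∧ t`.) -/
theorem stmt6 (n : ℕ) (t : Fin n → ℝ) (ht : ∀ i, 0 ≤ t i) :
    (Matrix.of fun i j : Fin n => min (t i) (t j)).PosSemidef := by
  -- For nonnegative `s` and `t`, `min s t` is the length of `(0, s] ∩ (0, t]`, that is, the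
  -- `L²` inner product of two indicators, so the matrix is a Gram matrix.
  have hmin (i j : Fin n) :
      min (t i) (t j) = MeasureTheory.volume.real (Set.Ioc 0 (t i) ∩ Set.Ioc 0 (t j)) := by
    rw [Set.Ioc_inter_Ioc]
    simp [ht]
  simp only [hmin]
  exact MeasureTheory.posSemidef_matrix_measure_inter (fun _ => measurableSet_Ioc) (by simp)
end

section
/- Let H be a real Hilbert space, T a set, and K : T → H a family of vectors whose linear span is dense in H. For a function f : T → ℝ, the following are equivalent: (1) there exists h ∈ H with ⟨K(t), h⟩ = f(t) for all t ∈ T; (2) there exists a constant C ≥ 0 such that for every n ∈ ℕ, every ξ : Fin n → ℝ and every t : Fin n → T, (∑_j ξ_j f(t_j))² ≤ C · ∑_i ∑_j ξ_i ξ_j ⟨K(t_i), K(t_j)⟩. -/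
/-!
If `f = ⟪K ·, h⟫`, the quadratic form is `‖∑ ξ j • K (t j)‖²`, so Cauchy–Schwarz gives the estimate
with `C = ‖h‖²`. Conversely, the estimate says that the linear functional `δ_t ↦ f t` on
finitely supported functions `T →₀ ℝ` is bounded by `√C` times the norm of the image under
`δ_t ↦ K t`. It therefore factors through that map, whose range is the dense span of `K`, and
extends to a bounded functional on `H` (`LinearMap.extendOfNorm`); the Riesz representation
theorem produces `h`.
-/

open RealInnerProductSpace

/-- The kernel quadratic form is the squared norm of the corresponding linear combination. -/
lemma sum_sum_mul_inner_eq_norm_sq {H ι : Type*} [NormedAddCommGroup H] [InnerProductSpace ℝ H]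
    [Fintype ι] (ξ : ι → ℝ) (v : ι → H) :
    ∑ i, ∑ j, ξ i * ξ j * ⟪v i, v j⟫ = ‖∑ j, ξ j • v j‖ ^ 2 := by
  rw [← real_inner_self_eq_norm_sq, sum_inner]
  simp_rw [inner_sum, real_inner_smul_left, real_inner_smul_right, mul_assoc]

/-- Let `K : T → H` have dense span in the real Hilbert space `H`.
A function `f : T → ℝ` is of the form `f t = ⟪K t, h⟫` for some `h ∈ H` (i.e., `f`
belongs to the RKHS of the kernel `(s,t) ↦ ⟪K s, K t⟫`) if and only if there is
`C ≥ 0` such that `(∑ j, ξ j * f (t j))² ≤ C * ∑ i ∑ j, ξ i ξ j ⟪K (t i), K (t j)⟫`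
for all finite tuples `ξ`, `t`. -/
theorem stmt7 {H : Type*} [NormedAddCommGroup H] [InnerProductSpace ℝ H] [CompleteSpace H]
    {T : Type*} (K : T → H)
    (hdense : Dense (Submodule.span ℝ (Set.range K) : Set H)) (f : T → ℝ) :
    (∃ h : H, ∀ t : T, ⟪K t, h⟫ = f t) ↔
    (∃ C : ℝ, 0 ≤ C ∧ ∀ (n : ℕ) (ξ : Fin n → ℝ) (t : Fin n → T),
      (∑ j, ξ j * f (t j)) ^ 2 ≤
        C * ∑ i, ∑ j, ξ i * ξ j * ⟪K (t i), K (t j)⟫) := by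
  constructor
  · rintro ⟨h, hh⟩
    refine ⟨‖h‖ ^ 2, by positivity, fun n ξ t => ?_⟩
    have hsum : ∑ j, ξ j * f (t j) = ⟪∑ j, ξ j • K (t j), h⟫ := by
      simp_rw [sum_inner, real_inner_smul_left, hh]
    rw [sum_sum_mul_inner_eq_norm_sq ξ fun j => K (t j), hsum, ← mul_pow, mul_comm ‖h‖, sq_le_sq,
      abs_of_nonneg (by positivity : 0 ≤ ‖∑ j, ξ j • K (t j)‖ * ‖h‖)]
    exact abs_real_inner_le_norm _ _
  · rintro ⟨C, hC, hbound⟩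
    let F : (T →₀ ℝ) →ₗ[ℝ] ℝ := Finsupp.linearCombination ℝ f
    let e : (T →₀ ℝ) →ₗ[ℝ] H := Finsupp.linearCombination ℝ K
    have he : DenseRange e := by
      rw [← Finsupp.range_linearCombination] at hdense
      rwa [LinearMap.coe_range] at hdense
    have hnorm : ∀ x, ‖F x‖ ≤ √C * ‖e x‖ := by
      intro x
      -- An enumeration of the support of `x` turns it into a tuple indexed by `Fin n`.
      let σ := x.support.equivFin.symm
      have hb := hbound _ (fun j => x (σ j)) (fun j => σ j)
      rw [sum_sum_mul_inner_eq_norm_sq (fun j => x (σ j)) fun j => K (σ j)] at hb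
      have hF : F x = ∑ j, x (σ j) * f (σ j) := by
        simp only [F, Finsupp.linearCombination_apply, Finsupp.sum, smul_eq_mul]
        rw [← Finset.sum_coe_sort]
        exact (σ.sum_comp fun s : x.support => x s * f s).symm
      have hE : e x = ∑ j, x (σ j) • K (σ j) := by
        simp only [e, Finsupp.linearCombination_apply, Finsupp.sum]
        rw [← Finset.sum_coe_sort]
        exact (σ.sum_comp fun s : x.support => x s • K s).symm
      rw [← hF, ← hE] at hb
      rw [Real.norm_eq_abs]
      refine abs_le_of_sq_le_sq (hb.trans_eq ?_) (by positivity)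
      rw [mul_pow, Real.sq_sqrt hC]
    let φ : H →L[ℝ] ℝ := F.extendOfNorm e
    refine ⟨(InnerProductSpace.toDual ℝ H).symm φ, fun t => ?_⟩
    have hφ : φ (e (Finsupp.single t 1)) = F (Finsupp.single t 1) :=
      LinearMap.extendOfNorm_eq he ⟨_, hnorm⟩ _
    rw [real_inner_comm, InnerProductSpace.toDual_symm_apply]
    simpa [e, F] using hφ
end

section
/- Let n ≥ 2 and let x_1 < x_2 < ⋯ < x_n be real numbers with 0 < x_1. Then the n × n matrix K_n with entries min(x_i, x_j) is invertible, and the (1,1) entry of K_n^{-1} equals x_2 / (x_1 (x_2 − x_1)). In particular this diagonal entry is independent of n for n ≥ 2, and the Dirac mass δ_{x_1} in the discrete RKHS of the restricted kernel has squared norm x_2 / (x_1 (x_2 − x_1)). -/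
/-!
Subtracting from each row of `K = (min (x i) (x j))` the preceding one leaves an upper triangular
matrix whose diagonal consists of the increments `x 0, x 1 - x 0, x 2 - x 1, …`. Hence `det K` is the
product of these increments, which are positive (`det_min_ne_zero`). Since `min (x ·) (x j)` is
constant beyond `j`, a combination of the first two columns of `K` alone already equals the first
basis vector (`min_mulVec_eq_single`); the coefficients of that combination form the first column
of `K⁻¹`, and the leading one is the claimed entry.
-/

theorem det_min_ne_zero (n : ℕ) (x : Fin (n + 1) → ℝ) (hx : StrictMono x) (hpos : 0 < x 0) :
    (Matrix.of fun i j : Fin (n + 1) => min (x i) (x j)).det ≠ 0 := by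
  let B : Matrix (Fin (n + 1)) (Fin (n + 1)) ℝ := Matrix.of fun i j =>
    Fin.cases (min (x 0) (x j))
      (fun k : Fin n => min (x k.succ) (x j) - min (x k.castSucc) (x j)) i
  have hdet : (Matrix.of fun i j : Fin (n + 1) => min (x i) (x j)).det = B.det := by
    refine Matrix.det_eq_of_forall_row_eq_smul_add_pred (fun _ => 1) ?_ ?_
    · intro j
      simp [B]
    · intro i j
      simp [B]
  have htri : B.BlockTriangular id := by
    intro i j hij
    induction i using Fin.cases with
    | zero => exact absurd hij (Fin.not_lt_zero j)
    | succ k =>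
      have h1 : x j ≤ x k.castSucc := hx.monotone (Fin.le_castSucc_iff.mpr hij)
      have h2 : x j ≤ x k.succ := hx.monotone hij.le
      simp [B, min_eq_right h1, min_eq_right h2]
  rw [hdet, Matrix.det_of_upperTriangular htri, Finset.prod_ne_zero_iff]
  intro i _
  induction i using Fin.cases with
  | zero => simpa [B] using hpos.ne'
  | succ k =>
    have h : x k.castSucc < x k.succ := hx Fin.castSucc_lt_succ
    simpa [B, min_eq_left h.le] using (sub_pos.mpr h).ne'

theorem min_mulVec_eq_single (n : ℕ) (x : Fin (n + 2) → ℝ) (hx : StrictMono x)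
    (hpos : 0 < x 0) :
    (Matrix.of fun i j : Fin (n + 2) => min (x i) (x j)).mulVec
        (Pi.single 0 (x 1 / (x 0 * (x 1 - x 0))) + Pi.single 1 (-1 / (x 1 - x 0)))
      = Pi.single 0 1 := by
  have h01 : x 0 < x 1 := hx Fin.zero_lt_one
  have hd : x 1 - x 0 ≠ 0 := (sub_pos.mpr h01).ne'
  have h0 : x 0 ≠ 0 := hpos.ne'
  ext i
  rw [Matrix.mulVec_add, Pi.add_apply, Matrix.mulVec_single, Matrix.mulVec_single]
  by_cases hi : i = 0
  · subst hi
    simp [min_eq_left h01.le]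
    field_simp
    ring
  · have h1 : x 1 ≤ x i := hx.monotone (Fin.one_le_of_ne_zero hi)
    simp [hi, min_eq_right h1, min_eq_right (h01.le.trans h1)]
    field_simp
    ring

/-- For `0 < x₁ < ⋯ < x_{n+2}` (a strictly increasing tuple of
`n+2 ≥ 2` positive reals), the Gram matrix `K = (min (x i) (x j))` of the
Brownian-motion kernel is invertible and the `(1,1)` entry of `K⁻¹` is
`x₂ / (x₁ (x₂ - x₁))` — independent of the size of the matrix.  (This entry is the
squared norm of the Dirac mass `δ_{x₁}` in the discrete RKHS of the restricted
kernel.) -/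
theorem stmt11 (n : ℕ) (x : Fin (n + 2) → ℝ) (hx : StrictMono x) (hpos : 0 < x 0) :
    IsUnit (Matrix.of fun i j : Fin (n + 2) => min (x i) (x j)).det ∧
    (Matrix.of fun i j : Fin (n + 2) => min (x i) (x j))⁻¹ 0 0
      = x 1 / (x 0 * (x 1 - x 0)) := by
  have hu := (det_min_ne_zero (n + 1) x hx hpos).isUnit
  refine ⟨hu, ?_⟩
  have h := congrArg (Matrix.mulVec (Matrix.of fun i j : Fin (n + 2) => min (x i) (x j))⁻¹)
    (min_mulVec_eq_single n x hx hpos)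
  rw [Matrix.mulVec_mulVec, Matrix.nonsing_inv_mul _ hu, Matrix.one_mulVec] at h
  simpa using (congrFun h 0).symm
end

section
/- Let (x_i)_{i∈ℕ} (indexed from 1) be a strictly increasing sequence of positive real numbers and let i ≥ 2. Set c_{i−1} = −1/(x_i − x_{i−1}), c_i = (x_{i+1} − x_{i−1}) / ((x_i − x_{i−1})(x_{i+1} − x_i)), and c_{i+1} = −1/(x_{i+1} − x_i). Then for every j ∈ ℕ, c_{i−1}·min(x_j, x_{i−1}) + c_i·min(x_j, x_i) + c_{i+1}·min(x_j, x_{i+1}) = 1 if j = i and = 0 otherwise. Consequently δ_{x_i} ∈ span{K(·,x_{i−1})|_V, K(·,x_i)|_V, K(·,x_{i+1})|_V} and ‖δ_{x_i}‖²_{H_V} = (x_{i+1} − x_{i−1}) / ((x_i − x_{i−1})(x_{i+1} − x_i)). -/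
/-!
Writing `a = 1 / (x i - x (i - 1))` and `b = 1 / (x (i + 1) - x i)`, the coefficients are
`-a`, `a + b`, `-b`, so the combination is a second difference of the piecewise linear function
`t ↦ min (x j) t`. That function is affine on `[x (i - 1), x (i + 1)]` unless its kink `x j` lies
strictly inside, and the only sample point strictly inside is `x i`; when `j = i` the slope drops
from `1` to `0` there, which gives the value `1`.
-/

/-- Let `x 0 < x 1 < ⋯` be a strictly increasing sequence of positive
reals and `i ≥ 1` (so that `x i` has both neighbors; in the paper's 1-based indexing
this is `i ≥ 2`).  With `c_{i-1} = -1/(x i - x (i-1))`,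
`c_i = (x (i+1) - x (i-1)) / ((x i - x (i-1)) (x (i+1) - x i))`, and
`c_{i+1} = -1/(x (i+1) - x i)`, for every `j` the combination
`c_{i-1} min(x j, x (i-1)) + c_i min(x j, x i) + c_{i+1} min(x j, x (i+1))`
equals `1` if `j = i` and `0` otherwise: hence `δ_{x_i}` lies in the span of the
three kernel functions `K(·,x_{i-1})|_V, K(·,x_i)|_V, K(·,x_{i+1})|_V`, and its
squared `H_V`-norm is `c_i = (x_{i+1} - x_{i-1})/((x_i - x_{i-1})(x_{i+1} - x_i))`. -/
theorem stmt13 (x : ℕ → ℝ) (hx : StrictMono x) (hpos : 0 < x 0) (i : ℕ) (hi : 1 ≤ i) :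
    ∀ j : ℕ,
      (-1 / (x i - x (i - 1))) * min (x j) (x (i - 1))
        + ((x (i + 1) - x (i - 1)) / ((x i - x (i - 1)) * (x (i + 1) - x i)))
            * min (x j) (x i)
        + (-1 / (x (i + 1) - x i)) * min (x j) (x (i + 1))
      = if j = i then 1 else 0 := by
  intro j
  have h1 : x (i - 1) < x i := hx (by omega)
  have h2 : x i < x (i + 1) := hx (by omega)
  have d1 : x i - x (i - 1) ≠ 0 := (sub_pos.2 h1).ne'
  have d2 : x (i + 1) - x i ≠ 0 := (sub_pos.2 h2).ne'
  rcases lt_trichotomy j i with h | rfl | h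
  · have hj : x j ≤ x (i - 1) := hx.monotone (by omega)
    rw [if_neg h.ne, min_eq_left hj, min_eq_left (hj.trans h1.le),
      min_eq_left (hj.trans (h1.trans h2).le)]
    field_simp
    ring
  · rw [if_pos rfl, min_eq_right h1.le, min_self, min_eq_left h2.le]
    field_simp
    ring
  · have hj : x (i + 1) ≤ x j := hx.monotone (by omega)
    rw [if_neg h.ne', min_eq_right hj, min_eq_right (h2.le.trans hj),
      min_eq_right ((h1.trans h2).le.trans hj)]
    field_simp
    ring
end

section
/- Let n ≥ 1 and let x_1 < x_2 < ⋯ < x_n be real numbers with 0 < x_1 and x_n < 1. Then the determinant of the n × n matrix with entries min(x_i, x_j) − x_i x_j equals x_1 · (x_2 − x_1)(x_3 − x_2) ⋯ (x_n − x_{n−1}) · (1 − x_n). -/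
/-!
For `i ≤ j` the kernel factors as `min (x i) (x j) - x i * x j = x i * (1 - x j)`. Hence subtracting
`(1 - x (i+1)) / (1 - x i)` times row `i` from row `i + 1` kills every entry left of the diagonal
(`Matrix.det_eq_of_forall_row_eq_smul_add_pred`) and leaves an upper triangular matrix with diagonal
entries `x 0 * (1 - x 0)` and `(x (i+1) - x i) * ((1 - x (i+1)) / (1 - x i))`. In the product of the
diagonal the ratios telescope to `(1 - x (Fin.last n)) / (1 - x 0)`.
-/

/-- For `0 < x₁ < ⋯ < x_{n+1} < 1` (a strictly increasing tuple of
`n+1 ≥ 1` reals in `(0,1)`), the determinant of the Gram matrix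
`(min (x i) (x j) - x i * x j)` of the Brownian-bridge kernel equals
`x₁ (x₂ - x₁) ⋯ (x_{n+1} - x_n) (1 - x_{n+1})`. -/
theorem stmt14 (n : ℕ) (x : Fin (n + 1) → ℝ) (hx : StrictMono x)
    (hpos : 0 < x 0) (hlt : x (Fin.last n) < 1) :
    (Matrix.of fun i j : Fin (n + 1) => min (x i) (x j) - x i * x j).det
      = x 0 * (∏ i : Fin n, (x i.succ - x i.castSucc)) * (1 - x (Fin.last n)) := by
  have hne : ∀ i, 1 - x i ≠ 0 := fun i => by
    have := hx.monotone (Fin.le_last i)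
    linarith
  have hmin : ∀ i j, i ≤ j → min (x i) (x j) = x i := fun i j h => min_eq_left (hx.monotone h)
  have hmin' : ∀ i j, j ≤ i → min (x i) (x j) = x j := fun i j h => min_eq_right (hx.monotone h)
  let A : Matrix (Fin (n + 1)) (Fin (n + 1)) ℝ :=
    Matrix.of fun i j => min (x i) (x j) - x i * x j
  let c : Fin n → ℝ := fun i => (1 - x i.succ) / (1 - x i.castSucc)
  let B : Matrix (Fin (n + 1)) (Fin (n + 1)) ℝ :=
    Matrix.of fun i j => Fin.cases (A 0 j) (fun k => A k.succ j - c k * A k.castSucc j) i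
  have hAB : A.det = B.det :=
    Matrix.det_eq_of_forall_row_eq_smul_add_pred c (fun j => by simp [B]) (fun i j => by simp [B])
  have hB : B.BlockTriangular id := by
    intro i j hij
    induction i using Fin.cases with
    | zero => exact absurd hij (Fin.not_lt_zero j)
    | succ k =>
      have h1 : j ≤ k.castSucc := Fin.le_castSucc_iff.mpr hij
      simp only [B, A, c, Matrix.of_apply, Fin.cases_succ]
      rw [hmin' _ _ h1, hmin' k.succ j (le_of_lt hij)]
      have := hne k.castSucc
      field_simp
      ring
  have hdiag : ∀ k : Fin n, B k.succ k.succ =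
      (x k.succ - x k.castSucc) * ((1 - x k.succ) / (1 - x k.castSucc)) := by
    intro k
    simp only [B, A, c, Matrix.of_apply, Fin.cases_succ]
    rw [min_self, hmin _ _ (Fin.castSucc_lt_succ (i := k)).le]
    have := hne k.castSucc
    field_simp
    ring
  have hzero : B 0 0 = x 0 * (1 - x 0) := by
    simp only [B, A, Matrix.of_apply, Fin.cases_zero, min_self]
    ring
  have htel : (1 - x 0) * ∏ k : Fin n, ((1 - x k.succ) / (1 - x k.castSucc))
      = 1 - x (Fin.last n) := by
    -- split the product over all indices at its first and at its last factor
    have h := (Fin.prod_univ_succ fun i => 1 - x i).symm.trans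
      (Fin.prod_univ_castSucc fun i => 1 - x i)
    rw [Finset.prod_div_distrib, ← mul_div_assoc, h,
      mul_div_cancel_left₀ _ (Finset.prod_ne_zero_iff.mpr fun i _ => hne _)]
  change A.det = _
  rw [hAB, Matrix.det_of_isUpperTriangular hB, Fin.prod_univ_succ, hzero, ← htel]
  simp only [hdiag, Finset.prod_mul_distrib]
  ring
end

section
/- Let n ≥ 3 and let x_1 < x_2 < ⋯ < x_n be real numbers with 0 < x_1 and x_n < 1, and let 2 ≤ i ≤ n − 1. Then the n × n matrix B with entries B_{jk} = min(x_j, x_k) − x_j x_k is invertible, and the (i,i) diagonal entry of B^{-1} equals (x_{i+1} − x_{i−1}) / ((x_i − x_{i−1})(x_{i+1} − x_i)). In particular, in the discrete RKHS of the Brownian bridge kernel restricted to V = {x_1, …, x_n}, ‖δ_{x_i}‖² = (x_{i+1} − x_{i−1}) / ((x_{i+1} − x_i)(x_i − x_{i−1})). -/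
/-!
Adjoin the endpoints `0` and `1` to the sample points. For fixed `t`, the function
`s ↦ min s t - s * t` vanishes at both endpoints and is piecewise linear with slope `1 - t` before
`t` and `-t` after it. Its divided second difference at a node is therefore `1` if `t` is that
node and `0` if `t` is any other node (`kernel_second_difference`). Since the boundary values
vanish, taking second differences at the sample points is multiplication by a tridiagonal matrix
(`tridiag`), which is thus a left inverse of the Gram matrix (`tridiag_mul_gram`). Its diagonal
entries `1 / (b - a) + 1 / (c - b)`, for consecutive nodes `a < b < c`, are the claimed values.
-/

/-- The nodes `0, x 0, …, x (N - 1), 1, 1, …`: the sample points, shifted by one index, with the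
endpoints of the unit interval adjoined. -/
noncomputable def node {N : ℕ} (x : Fin N → ℝ) (m : ℕ) : ℝ :=
  if m = 0 then 0 else if h : m - 1 < N then x ⟨m - 1, h⟩ else 1

lemma node_zero {N : ℕ} (x : Fin N → ℝ) : node x 0 = 0 := by simp [node]

lemma node_last {N : ℕ} (x : Fin N → ℝ) : node x (N + 1) = 1 := by simp [node]

lemma node_succ {N : ℕ} (x : Fin N → ℝ) (k : Fin N) : node x (k + 1) = x k := by simp [node]

lemma node_lt {N : ℕ} {x : Fin N → ℝ} (hx : StrictMono x) (h0 : ∀ k, 0 < x k)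
    (h1 : ∀ k, x k < 1) {a b : ℕ} (hab : a < b) (hb : b ≤ N + 1) : node x a < node x b := by
  obtain ⟨b, rfl⟩ : ∃ c, b = c + 1 := ⟨b - 1, by omega⟩
  rcases Nat.eq_zero_or_pos a with rfl | ha
  · rw [node_zero]
    rcases Nat.lt_or_ge b N with h | h
    · rw [node_succ x ⟨b, h⟩]; exact h0 _
    · obtain rfl : b = N := by omega
      rw [node_last]; exact one_pos
  · obtain ⟨a, rfl⟩ : ∃ c, a = c + 1 := ⟨a - 1, by omega⟩
    rw [node_succ x ⟨a, by omega⟩]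
    rcases Nat.lt_or_ge b N with h | h
    · rw [node_succ x ⟨b, h⟩]; exact hx (Fin.mk_lt_mk.2 (by omega))
    · obtain rfl : b = N := by omega
      rw [node_last]; exact h1 _

/-- Picking out one value of a function that vanishes at the two boundary indices `0` and `N + 1`,
by a sum over the interior indices only. -/
lemma sum_single_of_boundary_zero {N : ℕ} (F : ℕ → ℝ) (h0 : F 0 = 0) (hN : F (N + 1) = 0)
    {m : ℕ} (hm : m ≤ N + 1) (a : ℝ) :
    ∑ k : Fin N, (if (k : ℕ) + 1 = m then a else 0) * F (k + 1) = a * F m := by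
  by_cases h : 1 ≤ m ∧ m ≤ N
  · rw [Finset.sum_eq_single (⟨m - 1, by omega⟩ : Fin N)]
    · have : m - 1 + 1 = m := by omega
      simp [this]
    · intro k _ hk
      rw [if_neg, zero_mul]
      intro h'
      exact hk (Fin.ext (by simp; omega))
    · simp
  · have hF : F m = 0 := by
      obtain rfl | rfl : m = 0 ∨ m = N + 1 := by omega
      · exact h0
      · exact hN
    rw [hF, mul_zero]
    refine Finset.sum_eq_zero fun k _ => ?_
    rw [if_neg (by have := k.2; omega), zero_mul]

/-- The tridiagonal matrix of negated divided second differences at the sample points, acting on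
functions that vanish at `0` and `1`. -/
noncomputable def tridiag {N : ℕ} (x : Fin N → ℝ) : Matrix (Fin N) (Fin N) ℝ :=
  Matrix.of fun j k =>
    (if (k : ℕ) + 1 = j + 1 then
        1 / (node x (j + 1) - node x j) + 1 / (node x (j + 2) - node x (j + 1)) else 0)
      + (if (k : ℕ) + 1 = j + 2 then -(1 / (node x (j + 2) - node x (j + 1))) else 0)
      + (if (k : ℕ) + 1 = j then -(1 / (node x (j + 1) - node x j)) else 0)

/-- The negated divided second difference of `s ↦ min s t - s * t` over `a < b < c`, when `t` lies
in neither open gap. -/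
lemma kernel_second_difference {a b c t : ℝ} (hab : a < b) (hbc : b < c)
    (ht : t ≤ a ∨ t = b ∨ c ≤ t) :
    (1 / (b - a) + 1 / (c - b)) * (min b t - b * t) + -(1 / (c - b)) * (min c t - c * t)
      + -(1 / (b - a)) * (min a t - a * t) = if t = b then 1 else 0 := by
  have h1 : b - a ≠ 0 := by linarith
  have h2 : c - b ≠ 0 := by linarith
  rcases ht with h | rfl | h
  · rw [if_neg (by linarith), min_eq_right (by linarith), min_eq_right (by linarith),
      min_eq_right h]
    field_simp
    ring
  · rw [if_pos rfl, min_self, min_eq_right hbc.le, min_eq_left hab.le]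
    field_simp
    ring
  · rw [if_neg (by linarith), min_eq_left (by linarith), min_eq_left h,
      min_eq_left (by linarith)]
    field_simp
    ring

lemma tridiag_mul_gram {N : ℕ} {x : Fin N → ℝ} (hx : StrictMono x) (h0 : ∀ k, 0 < x k)
    (h1 : ∀ k, x k < 1) :
    tridiag x * (Matrix.of fun j k : Fin N => min (x j) (x k) - x j * x k) = 1 := by
  ext j l
  have hj := j.2
  have hl := l.2
  set F : ℕ → ℝ := fun m => min (node x m) (x l) - node x m * x l with hF
  have hF0 : F 0 = 0 := by simp [hF, node_zero, (h0 l).le]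
  have hFN : F (N + 1) = 0 := by simp [hF, node_last, (h1 l).le]
  have hFk : ∀ k : Fin N, min (x k) (x l) - x k * x l = F (k + 1) := fun k => by
    simp only [hF, node_succ]
  simp only [Matrix.mul_apply, tridiag, Matrix.of_apply, hFk, add_mul, Finset.sum_add_distrib]
  rw [sum_single_of_boundary_zero F hF0 hFN (by omega),
    sum_single_of_boundary_zero F hF0 hFN (by omega),
    sum_single_of_boundary_zero F hF0 hFN (by omega)]
  have key := kernel_second_difference (t := x l)
    (node_lt hx h0 h1 (Nat.lt_succ_self j) (by omega))
    (node_lt hx h0 h1 (Nat.lt_succ_self (j + 1)) (by omega)) (by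
      rw [← node_succ x l]
      rcases lt_trichotomy (l : ℕ) j with h | h | h
      · left
        rcases Nat.lt_or_ge (l + 1) j with h' | h'
        · exact (node_lt hx h0 h1 h' (by omega)).le
        · rw [show (l : ℕ) + 1 = j by omega]
      · right; left; rw [h]
      · right; right
        rcases Nat.lt_or_ge (j + 2) (l + 1) with h' | h'
        · exact (node_lt hx h0 h1 h' (by omega)).le
        · rw [show (l : ℕ) + 1 = j + 2 by omega])
  rw [Matrix.one_apply]
  refine key.trans ?_
  simp only [Nat.succ_eq_add_one, node_succ, hx.injective.eq_iff, eq_comm]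

/-- For `0 < x₁ < ⋯ < x_N < 1` with `N = n + 3 ≥ 3`, the Gram matrix
`B = (min (x j) (x k) - x j * x k)` of the Brownian-bridge kernel is invertible, and
for every interior index (the middle index `i.succ.castSucc` ranges over
`2, …, N - 1` in 1-based terms as `i` ranges over `Fin (n+1)`), the corresponding
diagonal entry of `B⁻¹` equals
`(x_{i+1} - x_{i-1}) / ((x_i - x_{i-1}) (x_{i+1} - x_i))`; this is the squared norm
of the Dirac mass `δ_{x_i}` in the discrete RKHS of the restricted kernel. -/
theorem stmt15 (n : ℕ) (x : Fin (n + 3) → ℝ) (hx : StrictMono x)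
    (hpos : 0 < x 0) (hlt : x (Fin.last (n + 2)) < 1) :
    IsUnit (Matrix.of fun j k : Fin (n + 3) => min (x j) (x k) - x j * x k).det ∧
    ∀ i : Fin (n + 1),
      (Matrix.of fun j k : Fin (n + 3) => min (x j) (x k) - x j * x k)⁻¹
          i.succ.castSucc i.succ.castSucc
        = (x i.succ.succ - x i.castSucc.castSucc)
            / ((x i.succ.castSucc - x i.castSucc.castSucc)
                * (x i.succ.succ - x i.succ.castSucc)) := by
  have h0 : ∀ k, 0 < x k := fun k => hpos.trans_le (hx.monotone (Fin.zero_le k))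
  have h1 : ∀ k, x k < 1 := fun k => (hx.monotone (Fin.le_last k)).trans_lt hlt
  have hinv := tridiag_mul_gram hx h0 h1
  refine ⟨(Matrix.isUnit_iff_isUnit_det _).1 (IsUnit.of_mul_eq_one_right _ hinv), fun i => ?_⟩
  rw [Matrix.inv_eq_left_inv hinv]
  have ea : node x (i + 1) = x i.castSucc.castSucc := node_succ x i.castSucc.castSucc
  have eb : node x (i + 1 + 1) = x i.succ.castSucc := node_succ x i.succ.castSucc
  have ec : node x (i + 1 + 2) = x i.succ.succ := node_succ x i.succ.succ
  have hab : x i.castSucc.castSucc < x i.succ.castSucc := hx (by simp [Fin.lt_def])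
  have hbc : x i.succ.castSucc < x i.succ.succ := hx (by simp [Fin.lt_def])
  have hab' := (sub_pos.2 hab).ne'
  have hbc' := (sub_pos.2 hbc).ne'
  simp only [tridiag, Matrix.of_apply, Fin.val_castSucc, Fin.val_succ, ea, eb, ec]
  rw [if_pos trivial, if_neg (by omega), if_neg (by omega)]
  field_simp
  ring
end

section
/- Let V ⊆ (0,∞) be a countable set and let a ∈ V be an accumulation point of V, i.e., a lies in the closure of V \ {a}. Then for every constant C ≥ 0 there exists a finitely supported function ξ : V → ℝ with ξ(a)² > C · ∑_{s} ∑_{t} ξ(s) ξ(t) min(s,t). Consequently the Dirac mass δ_a has infinite norm in the discrete RKHS H_V of the kernel K(s,t) = min(s,t) restricted to V × V, i.e., δ_a ∉ H_V. -/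
/-! Test against `ξ = δ_a - δ_b` with `b ∈ V \ {a}`. The quadratic form of `min` at this `ξ` is
`a + b - 2 min(a,b) = |a - b|`, the variance of a Brownian increment, while `ξ(a)² = 1`. Since `a`
is an accumulation point, `|a - b|` can be taken below `1 / (C + 1)`. -/

/-- Let `V ⊆ (0,∞)` be countable and let `a ∈ V` be an accumulation
point of `V` (i.e., `a ∈ closure (V \ {a})`).  Then for every `C ≥ 0` there is a
finitely supported `ξ : V → ℝ` with
`ξ(a)² > C * ∑_s ∑_t ξ(s) ξ(t) min(s,t)`; consequently the Dirac mass `δ_a` has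
infinite norm in the discrete RKHS of the kernel `K(s,t) = min s t` restricted to
`V × V`, i.e., `δ_a ∉ H_V`. -/
theorem stmt16 (V : Set ℝ) (hV : V ⊆ Set.Ioi 0) (hVc : V.Countable)
    (a : ℝ) (haV : a ∈ V) (hacc : a ∈ closure (V \ {a})) :
    ∀ C : ℝ, 0 ≤ C → ∃ ξ : V →₀ ℝ,
      (ξ ⟨a, haV⟩) ^ 2 >
        C * ∑ s ∈ ξ.support, ∑ t ∈ ξ.support, ξ s * ξ t * min (s : ℝ) (t : ℝ) := by
  intro C hC
  obtain ⟨b, ⟨hbV, hba⟩, hab⟩ := Metric.mem_closure_iff.mp hacc (1 / (C + 1)) (by positivity)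
  have hba : b ≠ a := hba
  have hne : (⟨a, haV⟩ : V) ≠ ⟨b, hbV⟩ := fun h => hba (congrArg Subtype.val h).symm
  have hsupp : (Finsupp.single (⟨a, haV⟩ : V) (1 : ℝ) + Finsupp.single (⟨b, hbV⟩ : V) (-1 : ℝ)).support
      = {(⟨a, haV⟩ : V), (⟨b, hbV⟩ : V)} :=
    Finsupp.support_single_add_single hne one_ne_zero (by norm_num)
  refine ⟨Finsupp.single ⟨a, haV⟩ 1 + Finsupp.single ⟨b, hbV⟩ (-1), ?_⟩
  have hform : a + b - 2 * min a b = |a - b| := by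
    rcases le_total a b with h | h
    · rw [min_eq_left h, abs_of_nonpos (by linarith)]; ring
    · rw [min_eq_right h, abs_of_nonneg (by linarith)]; ring
  have hlt : |a - b| * (C + 1) < 1 := by
    rwa [Real.dist_eq, lt_div_iff₀ (by positivity)] at hab
  rw [hsupp, Finset.sum_pair hne, Finset.sum_pair hne, Finset.sum_pair hne]
  simp only [Finsupp.add_apply, Finsupp.single_eq_same, Finsupp.single_eq_of_ne hne,
    Finsupp.single_eq_of_ne hne.symm, min_self, min_comm b a]
  nlinarith [abs_nonneg (a - b)]
end

section
/- Fix n ∈ ℕ and let K_n be the (n+1) × (n+1) rational matrix indexed by {0,1,…,n} with entries K_n(x,y) = ∑_{j=0}^{min(x,y)} C(x,j)·C(y,j). Let L be the lower triangular matrix with entries L_{xy} = C(x,y). Then: (a) K_n = L · Lᵀ; (b) K_n is invertible with K_n^{-1} = (Lᵀ)^{-1} · L^{-1}; and (c) for every x ∈ {0,…,n}, the diagonal entry (K_n^{-1})_{x,x} = ∑_{k=x}^{n} C(k,x)². Consequently, in the RKHS of the binomial kernel K_b on V = ℕ ∪ {0}, the squared norm of the projection of the Dirac mass δ_{x} onto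 span{K_b(·,0),…,K_b(·,n)} equals ∑_{k=x}^{n} C(k,x)², which tends to ∞ as n → ∞, so no Dirac mass δ_x belongs to that RKHS. -/
/-!
The lower triangular Pascal matrix `L` is inverted by its signed version
`M x y = (-1)^(x+y) C(x,y)` (`sum_choose_mul_signed`, binomial inversion).  The factorization
`K = L Lᵀ` is the definition of the kernel once the zero terms `j > min x y` are put back into
the sum.  Hence `K⁻¹ = Mᵀ M`, whose diagonal entry at `x` is the squared norm `∑ₖ C(k,x)²` of the
`x`-th column of `M`: the signs disappear.  Divergence holds because every term with `k ≥ x`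
is at least `1`.
-/

open Finset Filter

/-- Binomial inversion: the Pascal matrix times the signed Pascal matrix is the identity. -/
theorem sum_choose_mul_signed (x : ℕ) : ∀ n y : ℕ, x ≤ n →
    ∑ j ∈ range (n + 1), (x.choose j : ℚ) * ((-1) ^ (j + y) * (j.choose y : ℚ)) =
      if x = y then 1 else 0 := by
  induction x with
  | zero =>
    intro n y _
    rw [Finset.sum_range_succ', Finset.sum_eq_zero (by intro j _; simp)]
    cases y <;> simp
  | succ x ih =>
    intro n y hn
    obtain ⟨m, rfl⟩ : ∃ m, n = m + 1 := ⟨n - 1, by omega⟩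
    have hx : x ≤ m := by omega
    -- The sum for row `x`, with its index range extended by a zero term and then shifted.
    have hshift := ih (m + 1) y (by omega)
    rw [Finset.sum_range_succ'] at hshift
    rw [Finset.sum_range_succ']
    -- Pascal's rule in the row index `x + 1`.
    have hsplit : ∑ j ∈ range (m + 1),
        ((x + 1).choose (j + 1) : ℚ) * ((-1) ^ (j + 1 + y) * ((j + 1).choose y : ℚ)) =
        ∑ j ∈ range (m + 1),
          (x.choose j : ℚ) * ((-1) ^ (j + 1 + y) * ((j + 1).choose y : ℚ)) +
        ∑ j ∈ range (m + 1),
          (x.choose (j + 1) : ℚ) * ((-1) ^ (j + 1 + y) * ((j + 1).choose y : ℚ)) := by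
      rw [← Finset.sum_add_distrib]
      refine Finset.sum_congr rfl fun j _ => ?_
      rw [Nat.choose_succ_succ]; push_cast; ring
    rw [hsplit]
    cases y with
    | zero =>
      have h0 := ih m 0 hx
      have hneg : ∑ j ∈ range (m + 1),
          (x.choose j : ℚ) * ((-1) ^ (j + 1 + 0) * ((j + 1).choose 0 : ℚ)) =
          -∑ j ∈ range (m + 1), (x.choose j : ℚ) * ((-1) ^ (j + 0) * (j.choose 0 : ℚ)) := by
        rw [← Finset.sum_neg_distrib]
        refine Finset.sum_congr rfl fun j _ => ?_
        simp only [Nat.choose_zero_right]; ring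
      rw [hneg, h0]
      simp only [Nat.choose_zero_right] at hshift ⊢
      rw [if_neg (Nat.succ_ne_zero x)]
      linarith
    | succ y =>
      have h0 := ih m y hx
      have h1 := ih m (y + 1) hx
      -- Pascal's rule in the inner row index `j + 1`; the alternating sign makes it a difference.
      have hdiff : ∑ j ∈ range (m + 1),
          (x.choose j : ℚ) * ((-1) ^ (j + 1 + (y + 1)) * ((j + 1).choose (y + 1) : ℚ)) =
          ∑ j ∈ range (m + 1), (x.choose j : ℚ) * ((-1) ^ (j + y) * (j.choose y : ℚ)) -
          ∑ j ∈ range (m + 1),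
            (x.choose j : ℚ) * ((-1) ^ (j + (y + 1)) * (j.choose (y + 1) : ℚ)) := by
        rw [← Finset.sum_sub_distrib]
        refine Finset.sum_congr rfl fun j _ => ?_
        rw [Nat.choose_succ_succ]; push_cast; ring
      rw [hdiff, h0, h1]
      simp only [Nat.choose_zero_succ, Nat.cast_zero, mul_zero, add_zero] at hshift ⊢
      rw [hshift]
      simp

/-- Let `K_n` be the `(n+1) × (n+1)` rational Gram matrix of the
binomial kernel, `K_n x y = ∑_{j=0}^{min x y} C(x,j) C(y,j)`, and `L` the lower
triangular Pascal matrix `L x y = C(x,y)`.  Then (a) `K_n = L Lᵀ`, (b) `K_n` is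
invertible with `K_n⁻¹ = (Lᵀ)⁻¹ L⁻¹`, and (c) the diagonal entries of `K_n⁻¹` are
`(K_n⁻¹) x x = ∑_{k=x}^{n} C(k,x)²`.  These quantities tend to `∞` as `n → ∞`
(the norms of the projections of the Dirac mass `δ_x` blow up), so no Dirac mass
belongs to the RKHS of the binomial kernel. -/
theorem stmt19 (n : ℕ)
    (Kn L : Matrix (Fin (n + 1)) (Fin (n + 1)) ℚ)
    (hK : Kn = Matrix.of fun x y : Fin (n + 1) =>
      ∑ j ∈ Finset.range (min (x : ℕ) (y : ℕ) + 1),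
        ((x : ℕ).choose j : ℚ) * ((y : ℕ).choose j : ℚ))
    (hL : L = Matrix.of fun x y : Fin (n + 1) => ((x : ℕ).choose y : ℚ)) :
    Kn = L * L.transpose ∧
    IsUnit Kn.det ∧
    Kn⁻¹ = L.transpose⁻¹ * L⁻¹ ∧
    (∀ x : Fin (n + 1),
      Kn⁻¹ x x = ∑ k ∈ Finset.Icc (x : ℕ) n, ((k.choose x : ℚ)) ^ 2) ∧
    (∀ x : ℕ, Tendsto
      (fun N : ℕ => ∑ k ∈ Finset.Icc x N, ((k.choose x : ℝ)) ^ 2) atTop atTop) := by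
  -- The inverse of `L`.
  set M : Matrix (Fin (n + 1)) (Fin (n + 1)) ℚ :=
    Matrix.of fun x y => (-1) ^ ((x : ℕ) + y) * ((x : ℕ).choose y : ℚ) with hM
  have hLM : L * M = 1 := by
    ext x y
    rw [Matrix.mul_apply, hL, hM]
    simp only [Matrix.of_apply]
    rw [Fin.sum_univ_eq_sum_range
      (fun j => ((x : ℕ).choose j : ℚ) * ((-1) ^ (j + (y : ℕ)) * (j.choose y : ℚ))) (n + 1),
      sum_choose_mul_signed x n y (by omega), Matrix.one_apply]
    simp only [Fin.ext_iff]
  have hfac : Kn = L * L.transpose := by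
    ext x y
    rw [Matrix.mul_apply, hK, hL]
    simp only [Matrix.of_apply, Matrix.transpose_apply]
    rw [Fin.sum_univ_eq_sum_range
      (fun j => ((x : ℕ).choose j : ℚ) * ((y : ℕ).choose j : ℚ)) (n + 1)]
    refine Finset.sum_subset (Finset.range_mono (by omega)) fun j _ hj => ?_
    have hj' : (x : ℕ) < j ∨ (y : ℕ) < j := by
      rw [Finset.mem_range] at hj; omega
    rcases hj' with h | h <;> simp [Nat.choose_eq_zero_of_lt h]
  have hLinv : L⁻¹ = M := Matrix.inv_eq_right_inv hLM
  have hLdet : IsUnit L.det := Matrix.isUnit_det_of_right_inverse hLM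
  have hinv : Kn⁻¹ = L.transpose⁻¹ * L⁻¹ := by rw [hfac, Matrix.mul_inv_rev]
  refine ⟨hfac, ?_, hinv, fun x => ?_, fun x => ?_⟩
  · rw [hfac, Matrix.det_mul, Matrix.det_transpose]
    exact hLdet.mul hLdet
  · rw [hinv, ← Matrix.transpose_nonsing_inv, hLinv, Matrix.mul_apply]
    have hsq : ∀ k : Fin (n + 1), M.transpose x k * M k x = (((k : ℕ).choose x : ℚ)) ^ 2 := by
      intro k
      have hsign : ((-1 : ℚ) ^ ((k : ℕ) + x)) * (-1) ^ ((k : ℕ) + x) = 1 := by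
        rw [← mul_pow]; simp
      simp only [Matrix.transpose_apply, hM, Matrix.of_apply]
      linear_combination (((k : ℕ).choose x : ℚ)) ^ 2 * hsign
    rw [Finset.sum_congr rfl fun k _ => hsq k,
      Fin.sum_univ_eq_sum_range (fun k => ((k.choose x : ℚ)) ^ 2) (n + 1)]
    symm
    refine Finset.sum_subset (fun k hk => ?_) fun k hk hk' => ?_
    · rw [Finset.mem_Icc] at hk; rw [Finset.mem_range]; omega
    · rw [Finset.mem_range] at hk
      rw [Finset.mem_Icc] at hk'
      simp [Nat.choose_eq_zero_of_lt (show k < (x : ℕ) by omega)]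
  · refine tendsto_atTop_mono (f := fun N : ℕ => (N : ℝ) - x) (fun N => ?_)
      (tendsto_atTop_add_const_right _ _ tendsto_natCast_atTop_atTop)
    have hone : ∑ k ∈ Finset.Icc x N, (1 : ℝ) ≤ ∑ k ∈ Finset.Icc x N, ((k.choose x : ℝ)) ^ 2 := by
      refine Finset.sum_le_sum fun k hk => ?_
      have : (1 : ℝ) ≤ (k.choose x : ℝ) := by
        exact_mod_cast Nat.choose_pos (Finset.mem_Icc.1 hk).1
      exact one_le_pow₀ this
    refine le_trans ?_ hone
    rw [Finset.sum_const, Nat.card_Icc, nsmul_eq_mul, mul_one, sub_le_iff_le_add]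
    exact_mod_cast (by omega : N ≤ N + 1 - x + x)
end
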